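/- Let Y be a random N×N complex matrix with i.i.d. standard complex Gaussian entries. For every fixed N×N complex matrix Z, every x ∈ [0,1], and every 0 ≤ k ≤ N, the expectation E_Y[ f^{=2(N−k)}(√x · Z + √(1−x) · Y) ] = x^{N−k} · f^{=2(N−k)}(Z). -/

import Mathlib

open MeasureTheory ProbabilityTheory

/-- The standard complex Gaussian measure on `ℂ`: the distribution of `a + b i`
where `a, b` are independent real Gaussians of mean `0` and variance `1/2`. -/
noncomputable def stdCGaussian : Measure ℂ :=
  ((gaussianReal 0 (1 / 2)).prod (gaussianReal 0 (1 / 2))).map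
    (fun p => (p.1 : ℂ) + (p.2 : ℂ) * Complex.I)

/-- The distribution of an `N×N` random complex matrix with i.i.d. standard
complex Gaussian entries. -/
noncomputable def matrixGaussian (N : ℕ) : Measure (Fin N → Fin N → ℂ) :=
  Measure.pi fun _ : Fin N => Measure.pi fun _ : Fin N => stdCGaussian

/-- `h₂(z) = z * conj z - 1`. -/
noncomputable def h2 (z : ℂ) : ℂ := z * (starRingEnd ℂ) z - 1

/-- The degree-`2(N-k)` part `f^{=2(N-k)}(Z)` of `|Per Z|²`. -/
noncomputable def fdeg (N k : ℕ) (Z : Fin N → Fin N → ℂ) : ℂ :=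
  ∑ R ∈ Finset.powersetCard k (Finset.univ : Finset (Fin N)),
  ∑ R' ∈ Finset.powersetCard k (Finset.univ : Finset (Fin N)),
    (Nat.factorial k : ℂ) *
      ∑ σ' : {i : Fin N // i ∈ Rᶜ} ≃ {i : Fin N // i ∈ R'ᶜ},
      ∑ ρ' : {i : Fin N // i ∈ Rᶜ} ≃ {i : Fin N // i ∈ R'ᶜ},
        ∏ i : {i : Fin N // i ∈ Rᶜ},
          if σ' i = ρ' i then h2 (Z (σ' i) i)
          else Z (σ' i) i * (starRingEnd ℂ) (Z (ρ' i) i)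

/-- The contribution of a single matrix entry `z` to a product of `z`'s, conjugates and `h2`'s:
`p` says whether the entry occurs as `z`, and `q` whether it occurs as `conj z`. -/
noncomputable def entryFactor (p q : Prop) [Decidable p] [Decidable q] (z : ℂ) : ℂ :=
  if p then (if q then h2 z else z) else if q then (starRingEnd ℂ) z else 1

lemma prod_entryFactor {ι : Type*} [Fintype ι] [DecidableEq ι] (a b : ι) (w : ι → ℂ) :
    ∏ r, entryFactor (a = r) (b = r) (w r)
      = if a = b then h2 (w a) else w a * (starRingEnd ℂ) (w b) := by
  split_ifs with h
  · subst h
    have : ∀ r, entryFactor (a = r) (a = r) (w r) = if a = r then h2 (w r) else 1 := by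
      intro r
      unfold entryFactor
      split_ifs <;> rfl
    simp [this]
  · have : ∀ r, entryFactor (a = r) (b = r) (w r)
        = (if a = r then w r else 1) * (if b = r then (starRingEnd ℂ) (w r) else 1) := by
      intro r
      unfold entryFactor
      split_ifs with h1 h2
      · exact absurd (h1.trans h2.symm) h
      all_goals simp
    simp_rw [this]
    rw [Finset.prod_mul_distrib, Finset.prod_ite_eq, Finset.prod_ite_eq]
    simp

instance : IsProbabilityMeasure stdCGaussian :=
  Measure.isProbabilityMeasure_map (by fun_prop)

lemma memLp_two_stdCGaussian : MemLp (fun y : ℂ => y) 2 stdCGaussian := by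
  have hg : MemLp (fun a : ℝ => (a : ℂ)) 2 (gaussianReal 0 (1 / 2)) :=
    (memLp_id_gaussianReal' 2 (by simp)).ofReal
  rw [stdCGaussian, memLp_map_measure_iff (by fun_prop) (by fun_prop)]
  exact (hg.comp_fst _).add ((hg.comp_snd _).mul_const Complex.I)

lemma integrable_stdCGaussian : Integrable (fun y : ℂ => y) stdCGaussian :=
  memLp_two_stdCGaussian.integrable (by norm_num)

lemma integrable_conj_stdCGaussian :
    Integrable (fun y : ℂ => (starRingEnd ℂ) y) stdCGaussian :=
  memLp_two_stdCGaussian.star.integrable (by norm_num)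

lemma integrable_mul_conj_stdCGaussian :
    Integrable (fun y : ℂ => y * (starRingEnd ℂ) y) stdCGaussian :=
  memLp_two_stdCGaussian.integrable_mul memLp_two_stdCGaussian.star

lemma integral_stdCGaussian : ∫ y, y ∂stdCGaussian = 0 := by
  have hg : Integrable (fun a : ℝ => (a : ℂ)) (gaussianReal 0 (1 / 2)) :=
    ((memLp_id_gaussianReal' 1 (by simp)).integrable le_rfl).ofReal
  have h0 : ∫ a : ℝ, (a : ℂ) ∂(gaussianReal 0 (1 / 2)) = 0 := by
    rw [integral_complex_ofReal, integral_id_gaussianReal, Complex.ofReal_zero]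
  rw [stdCGaussian, integral_map (by fun_prop) (by fun_prop),
    integral_add (hg.comp_fst _) ((hg.comp_snd _).mul_const _), integral_mul_const,
    integral_fun_fst (fun a : ℝ => (a : ℂ)), integral_fun_snd (fun a : ℝ => (a : ℂ)), h0]
  simp

lemma integral_conj_stdCGaussian : ∫ y, (starRingEnd ℂ) y ∂stdCGaussian = 0 := by
  rw [integral_conj, integral_stdCGaussian, map_zero]

lemma integral_mul_conj_stdCGaussian :
    ∫ y, y * (starRingEnd ℂ) y ∂stdCGaussian = 1 := by
  have hg : Integrable (fun a : ℝ => a ^ 2) (gaussianReal 0 (1 / 2)) :=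
    (memLp_id_gaussianReal' 2 (by simp)).integrable_sq
  have h2 : ∫ a : ℝ, a ^ 2 ∂(gaussianReal 0 (1 / 2)) = 1 / 2 := by
    have := variance_fun_id_gaussianReal (μ := 0) (v := 1 / 2)
    rw [variance_of_integral_eq_zero (by fun_prop) (by simp)] at this
    simpa using this
  have hsq : ∀ p : ℝ × ℝ, ((p.1 : ℂ) + p.2 * Complex.I)
      * (starRingEnd ℂ) ((p.1 : ℂ) + p.2 * Complex.I) = ((p.1 ^ 2 + p.2 ^ 2 : ℝ) : ℂ) := by
    intro p
    rw [Complex.mul_conj, Complex.normSq_add_mul_I]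
  rw [stdCGaussian, integral_map (by fun_prop)
    (Continuous.aestronglyMeasurable (by fun_prop))]
  simp_rw [hsq]
  rw [integral_complex_ofReal, integral_add (hg.comp_fst _) (hg.comp_snd _),
    integral_fun_fst (fun a : ℝ => a ^ 2), integral_fun_snd (fun a : ℝ => a ^ 2), h2]
  norm_num

lemma h2_affine (u v z y : ℂ) :
    h2 (u * z + v * y) = (u * z * (starRingEnd ℂ) (u * z) - 1)
      + u * z * (starRingEnd ℂ) v * (starRingEnd ℂ) y
      + v * (starRingEnd ℂ) (u * z) * y
      + v * (starRingEnd ℂ) v * (y * (starRingEnd ℂ) y) := by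
  simp only [h2, map_add, map_mul]
  ring

lemma integrable_entryFactor (p q : Prop) [Decidable p] [Decidable q] (u v z : ℂ) :
    Integrable (fun y => entryFactor p q (u * z + v * y)) stdCGaussian := by
  have hy := integrable_stdCGaussian
  have hc := integrable_conj_stdCGaussian
  have hm := integrable_mul_conj_stdCGaussian
  unfold entryFactor
  split_ifs
  · simp_rw [h2_affine]
    exact (((integrable_const _).add (hc.const_mul _)).add (hy.const_mul _)).add (hm.const_mul _)
  · exact (integrable_const _).add (hy.const_mul _)
  · simp only [map_add, map_mul]
    exact (integrable_const _).add (hc.const_mul _)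
  · exact integrable_const _

lemma integral_entryFactor (p q : Prop) [Decidable p] [Decidable q] (z : ℂ)
    {x : ℝ} (hx0 : 0 ≤ x) (hx1 : x ≤ 1) :
    ∫ y, entryFactor p q ((Real.sqrt x : ℂ) * z + (Real.sqrt (1 - x) : ℂ) * y) ∂stdCGaussian
      = ((if p then (Real.sqrt x : ℂ) else 1) * (if q then (Real.sqrt x : ℂ) else 1))
        * entryFactor p q z := by
  have hy := integrable_stdCGaussian
  have hc := integrable_conj_stdCGaussian
  have hm := integrable_mul_conj_stdCGaussian
  have hu : (Real.sqrt x : ℂ) * Real.sqrt x = x := by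
    rw [← Complex.ofReal_mul, Real.mul_self_sqrt hx0]
  have hv : (Real.sqrt (1 - x) : ℂ) * Real.sqrt (1 - x) = 1 - x := by
    rw [← Complex.ofReal_mul, Real.mul_self_sqrt (by linarith)]
    push_cast
    rfl
  have hIy (c : ℂ) : ∫ y, c * y ∂stdCGaussian = 0 := by
    rw [integral_const_mul c (fun y : ℂ => y), integral_stdCGaussian, mul_zero]
  unfold entryFactor
  split_ifs
  · simp_rw [h2_affine]
    have hA (A B : ℂ) : Integrable (fun y => A + B * (starRingEnd ℂ) y) stdCGaussian :=
      (integrable_const _).add (hc.const_mul _)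
    have hB (A B C : ℂ) : Integrable (fun y => A + B * (starRingEnd ℂ) y + C * y) stdCGaussian :=
      (hA A B).add (hy.const_mul _)
    rw [integral_add (hB _ _ _) (hm.const_mul _), integral_add (hA _ _) (hy.const_mul _),
      integral_add (integrable_const _) (hc.const_mul _), hIy, integral_const_mul,
      integral_const_mul, integral_conj_stdCGaussian, integral_mul_conj_stdCGaussian]
    simp only [integral_const, probReal_univ, one_smul, map_mul, Complex.conj_ofReal, h2]
    linear_combination hv + hu
  · rw [integral_add (integrable_const _) (hy.const_mul _), hIy]
    simp
  · simp only [map_add, map_mul]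
    rw [integral_add (integrable_const _) (hc.const_mul _), integral_const_mul _ (starRingEnd ℂ),
      integral_conj_stdCGaussian]
    simp
  · simp

/-- The monomial attached to `a, b` on the columns in `s`, as a product over all matrix entries. -/
lemma prod_prod_entryFactor {N : ℕ} (s : Finset (Fin N)) (a b : Fin N → Fin N)
    (W : Fin N → Fin N → ℂ) :
    ∏ r, ∏ c, (if c ∈ s then entryFactor (a c = r) (b c = r) (W r c) else 1)
      = ∏ c ∈ s, if a c = b c then h2 (W (a c) c)
          else W (a c) c * (starRingEnd ℂ) (W (b c) c) := by
  rw [Finset.prod_comm, ← Fintype.prod_ite_mem s]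
  refine Finset.prod_congr rfl fun c _ => ?_
  split_ifs with hc h
  · rw [prod_entryFactor (a c) (b c) (fun r => W r c), if_pos h]
  · rw [prod_entryFactor (a c) (b c) (fun r => W r c), if_neg h]
  · simp

lemma integrable_monomial {N : ℕ} (s : Finset (Fin N)) (a b : Fin N → Fin N)
    (Z : Fin N → Fin N → ℂ) (u v : ℂ) :
    Integrable (fun Y : Fin N → Fin N → ℂ => ∏ c ∈ s,
      if a c = b c then h2 (u * Z (a c) c + v * Y (a c) c)
      else (u * Z (a c) c + v * Y (a c) c)
        * (starRingEnd ℂ) (u * Z (b c) c + v * Y (b c) c)) (matrixGaussian N) := by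
  simp_rw [← prod_prod_entryFactor s a b (fun i j => u * Z i j + v * _)]
  refine Integrable.fintype_prod (f := fun r (y : Fin N → ℂ) => ∏ c, if c ∈ s then
    entryFactor (a c = r) (b c = r) (u * Z r c + v * y c) else 1) fun r => ?_
  refine Integrable.fintype_prod (f := fun c (y : ℂ) => if c ∈ s then
    entryFactor (a c = r) (b c = r) (u * Z r c + v * y) else 1) fun c => ?_
  split_ifs
  · exact integrable_entryFactor _ _ _ _ _
  · exact integrable_const _

lemma integral_monomial {N : ℕ} (s : Finset (Fin N)) (a b : Fin N → Fin N)
    (Z : Fin N → Fin N → ℂ) {x : ℝ} (hx0 : 0 ≤ x) (hx1 : x ≤ 1) :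
    ∫ Y : Fin N → Fin N → ℂ, (∏ c ∈ s,
      if a c = b c then h2 ((Real.sqrt x : ℂ) * Z (a c) c + (Real.sqrt (1 - x) : ℂ) * Y (a c) c)
      else ((Real.sqrt x : ℂ) * Z (a c) c + (Real.sqrt (1 - x) : ℂ) * Y (a c) c)
        * (starRingEnd ℂ) ((Real.sqrt x : ℂ) * Z (b c) c + (Real.sqrt (1 - x) : ℂ) * Y (b c) c))
          ∂(matrixGaussian N)
      = (x : ℂ) ^ s.card * ∏ c ∈ s, if a c = b c then h2 (Z (a c) c)
          else Z (a c) c * (starRingEnd ℂ) (Z (b c) c) := by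
  have hu : (Real.sqrt x : ℂ) * Real.sqrt x = x := by
    rw [← Complex.ofReal_mul, Real.mul_self_sqrt hx0]
  simp_rw [← prod_prod_entryFactor s a b
    (fun i j => (Real.sqrt x : ℂ) * Z i j + (Real.sqrt (1 - x) : ℂ) * _)]
  rw [← prod_prod_entryFactor s a b Z, matrixGaussian,
    integral_fintype_prod_eq_prod (f := fun r (y : Fin N → ℂ) => ∏ c, if c ∈ s then
      entryFactor (a c = r) (b c = r)
        ((Real.sqrt x : ℂ) * Z r c + (Real.sqrt (1 - x) : ℂ) * y c) else 1)]
  have hrow : ∀ r, ∫ y : Fin N → ℂ, (∏ c, if c ∈ s then entryFactor (a c = r) (b c = r)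
        ((Real.sqrt x : ℂ) * Z r c + (Real.sqrt (1 - x) : ℂ) * y c) else 1)
        ∂(Measure.pi fun _ => stdCGaussian)
      = (∏ c, if c ∈ s then (if a c = r then (Real.sqrt x : ℂ) else 1)
          * (if b c = r then (Real.sqrt x : ℂ) else 1) else 1)
        * ∏ c, if c ∈ s then entryFactor (a c = r) (b c = r) (Z r c) else 1 := by
    intro r
    rw [integral_fintype_prod_eq_prod (f := fun c (y : ℂ) => if c ∈ s then
      entryFactor (a c = r) (b c = r)
        ((Real.sqrt x : ℂ) * Z r c + (Real.sqrt (1 - x) : ℂ) * y) else 1),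
      ← Finset.prod_mul_distrib]
    refine Finset.prod_congr rfl fun c _ => ?_
    by_cases hc : c ∈ s
    · simp only [hc, if_true, integral_entryFactor _ _ _ hx0 hx1]
    · simp [hc]
  simp_rw [hrow]
  rw [Finset.prod_mul_distrib]
  congr 1
  rw [Finset.prod_comm]
  have hcol : ∀ c, (∏ r, if c ∈ s then (if a c = r then (Real.sqrt x : ℂ) else 1)
      * (if b c = r then (Real.sqrt x : ℂ) else 1) else 1) = if c ∈ s then (x : ℂ) else 1 := by
    intro c
    split_ifs
    · rw [Finset.prod_mul_distrib, Finset.prod_ite_eq, Finset.prod_ite_eq]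
      simpa using hu
    · simp
  simp_rw [hcol]
  simp

/-- A term of `fdeg`, written with total functions in place of partial bijections. -/
lemma prod_subtype_eq_monomial {N : ℕ} (s t : Finset (Fin N))
    (σ ρ : {i : Fin N // i ∈ s} → {i : Fin N // i ∈ t}) :
    ∃ a b : Fin N → Fin N, ∀ W : Fin N → Fin N → ℂ,
      (∏ i : {i : Fin N // i ∈ s}, if σ i = ρ i then h2 (W (σ i) i)
        else W (σ i) i * (starRingEnd ℂ) (W (ρ i) i))
      = ∏ c ∈ s, if a c = b c then h2 (W (a c) c)
        else W (a c) c * (starRingEnd ℂ) (W (b c) c) := by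
  refine ⟨fun c => if h : c ∈ s then σ ⟨c, h⟩ else c, fun c => if h : c ∈ s then ρ ⟨c, h⟩ else c,
    fun W => ?_⟩
  rw [← Finset.prod_coe_sort s]
  refine Finset.prod_congr rfl fun i _ => ?_
  simp only [i.2, dite_true, Subtype.coe_eta, ← Subtype.ext_iff]

/-- For a fixed `N×N` complex matrix `Z`, `x ∈ [0,1]`, `0 ≤ k ≤ N`, and
`Y` a random matrix with i.i.d. standard complex Gaussian entries,
`E_Y[ f^{=2(N−k)}(√x·Z + √(1−x)·Y) ] = x^{N−k} · f^{=2(N−k)}(Z)`. -/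
theorem fdeg_noise_eigen (N k : ℕ) (hk : k ≤ N) (Z : Fin N → Fin N → ℂ)
    (x : ℝ) (hx0 : 0 ≤ x) (hx1 : x ≤ 1) :
    ∫ Y, fdeg N k (fun i j => (Real.sqrt x : ℂ) * Z i j + (Real.sqrt (1 - x) : ℂ) * Y i j)
        ∂(matrixGaussian N)
      = (x : ℂ) ^ (N - k) * fdeg N k Z := by
  have hint : ∀ (R R' : Finset (Fin N)) (σ ρ : {i : Fin N // i ∈ Rᶜ} ≃ {i : Fin N // i ∈ R'ᶜ}),
      Integrable (fun Y : Fin N → Fin N → ℂ => ∏ i : {i : Fin N // i ∈ Rᶜ},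
        if σ i = ρ i then
          h2 ((Real.sqrt x : ℂ) * Z (σ i) i + (Real.sqrt (1 - x) : ℂ) * Y (σ i) i)
        else ((Real.sqrt x : ℂ) * Z (σ i) i + (Real.sqrt (1 - x) : ℂ) * Y (σ i) i)
          * (starRingEnd ℂ) ((Real.sqrt x : ℂ) * Z (ρ i) i + (Real.sqrt (1 - x) : ℂ) * Y (ρ i) i))
        (matrixGaussian N) := by
    intro R R' σ ρ
    obtain ⟨a, b, hab⟩ := prod_subtype_eq_monomial _ _ σ ρ
    exact (integrable_monomial Rᶜ a b Z _ _).congr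
      (.of_forall fun Y => (hab fun i j => _ * Z i j + _ * Y i j).symm)
  unfold fdeg
  rw [integral_finsetSum _ fun R _ => integrable_finsetSum _ fun R' _ =>
    (integrable_finsetSum _ fun σ _ => integrable_finsetSum _ fun ρ _ =>
      hint R R' σ ρ).const_mul _, Finset.mul_sum]
  refine Finset.sum_congr rfl fun R hR => ?_
  rw [integral_finsetSum _ fun R' _ =>
    (integrable_finsetSum _ fun σ _ => integrable_finsetSum _ fun ρ _ =>
      hint R R' σ ρ).const_mul _, Finset.mul_sum]
  refine Finset.sum_congr rfl fun R' _ => ?_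
  rw [integral_const_mul, mul_left_comm]
  congr 1
  rw [integral_finsetSum _ fun σ _ =>
    integrable_finsetSum _ fun ρ _ => hint R R' σ ρ, Finset.mul_sum]
  refine Finset.sum_congr rfl fun σ _ => ?_
  rw [integral_finsetSum _ fun ρ _ => hint R R' σ ρ, Finset.mul_sum]
  refine Finset.sum_congr rfl fun ρ _ => ?_
  obtain ⟨a, b, hab⟩ := prod_subtype_eq_monomial _ _ σ ρ
  have hcard : Rᶜ.card = N - k := by
    rw [Finset.card_compl, Fintype.card_fin, (Finset.mem_powersetCard.mp hR).2]
  rw [hab Z, ← hcard, ← integral_monomial Rᶜ a b Z hx0 hx1]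
  exact integral_congr_ae (.of_forall fun Y => hab fun i j => _ * Z i j + _ * Y i j)
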